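/- Define the sesquilinear pairing (p,q)_k = (p*(T(k)) q)(0) on the polynomial ring P of a finite complex reflection group G. Then: (i) (p^g, q^g)_k = (p,q)_k for all g ∈ G; (ii) (ξ* p, q)_k = (p, T_ξ(k) q)_k for all ξ ∈ V; and (iii) the homogeneous-isotypic components P_{m,τ} and P_{l,σ} are orthogonal unless m = l and τ = σ. -/

import Mathlib

open MvPolynomial Finset CategoryTheory

noncomputable section

/-- The matrix underlying an element of a subgroup of the unitary group. -/
def matOf {n : ℕ} {G : Subgroup (Matrix.unitaryGroup (Fin n) ℂ)} (g : G) :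
    Matrix (Fin n) (Fin n) ℂ :=
  ((g : Matrix.unitaryGroup (Fin n) ℂ) : Matrix (Fin n) (Fin n) ℂ)

/-- Substitution action `p(x) ↦ p(Mx)` of a matrix on polynomials; the action of `g ∈ G`
on polynomials, `p^g(x) = p(g⁻¹x)`, is `act (matOf g⁻¹)`. -/
def act (n : ℕ) (M : Matrix (Fin n) (Fin n) ℂ) :
    MvPolynomial (Fin n) ℂ →ₐ[ℂ] MvPolynomial (Fin n) ℂ :=
  aeval fun i => ∑ j, C (M i j) * X j

/-- `p*(T)` on a monomial `x^α`: the operator `∏ᵢ Tᵢ^{αᵢ}` (the `Tᵢ` commute). -/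
def monOp {n : ℕ} (T : Fin n → MvPolynomial (Fin n) ℂ → MvPolynomial (Fin n) ℂ)
    (α : Fin n →₀ ℕ) : MvPolynomial (Fin n) ℂ → MvPolynomial (Fin n) ℂ :=
  ((List.finRange n).map fun i => (T i)^[α i]).foldr (· ∘ ·) id

/-- The pairing `(p,q)_k = (p*(T(k))q)(0)`, where `p*` is obtained from `p` by
conjugating the coefficients and substituting `Tᵢ` for `xᵢ`. -/
def pairK {n : ℕ} (T : Fin n → MvPolynomial (Fin n) ℂ → MvPolynomial (Fin n) ℂ)
    (p q : MvPolynomial (Fin n) ℂ) : ℂ :=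
  eval (0 : Fin n → ℂ)
    (∑ α ∈ p.support, (starRingEnd ℂ) (coeff α p) • monOp T α q)

/-- Substituting commuting operators: an algebra homomorphism with `X i ↦ T i`. -/
lemma exists_subst {n : ℕ} {A : Type*} [Ring A] [Algebra ℂ A] (T : Fin n → A)
    (h : ∀ i j, T i * T j = T j * T i) :
    ∃ Φ : MvPolynomial (Fin n) ℂ →ₐ[ℂ] A, ∀ i, Φ (X i) = T i := by
  have hc : ∀ a ∈ Set.range T, ∀ b ∈ Set.range T, a * b = b * a := by
    rintro _ ⟨i, rfl⟩ _ ⟨j, rfl⟩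
    exact h i j
  letI := Algebra.adjoinCommRingOfComm ℂ hc
  let F : MvPolynomial (Fin n) ℂ →ₐ[ℂ] Algebra.adjoin ℂ (Set.range T) :=
    aeval fun i => (⟨T i, Algebra.subset_adjoin ⟨i, rfl⟩⟩ : Algebra.adjoin ℂ (Set.range T))
  refine ⟨(Algebra.adjoin ℂ (Set.range T)).val.comp F, fun i => ?_⟩
  simp [F]

lemma foldr_comp_eq {n : ℕ} (T : Fin n → Module.End ℂ (MvPolynomial (Fin n) ℂ))
    (α : Fin n →₀ ℕ) (L : List (Fin n)) (q : MvPolynomial (Fin n) ℂ) :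
    ((L.map fun i => (fun p => T i p)^[α i]).foldr (· ∘ ·) id) q
      = (L.map fun i => T i ^ α i).prod q := by
  induction L with
  | nil => simp
  | cons a L ih =>
    simp only [List.map_cons, List.foldr_cons, Function.comp_apply, List.prod_cons,
      Module.End.mul_apply]
    rw [ih, Module.End.pow_apply]

lemma monOp_eq {n : ℕ} (T : Fin n → Module.End ℂ (MvPolynomial (Fin n) ℂ))
    (Φ : MvPolynomial (Fin n) ℂ →ₐ[ℂ] Module.End ℂ (MvPolynomial (Fin n) ℂ))
    (hΦ : ∀ i, Φ (X i) = T i) (α : Fin n →₀ ℕ) (q : MvPolynomial (Fin n) ℂ) :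
    monOp (fun i p => T i p) α q = Φ (monomial α 1) q := by
  unfold monOp
  rw [foldr_comp_eq]
  have : (monomial α (1 : ℂ)) = ((List.finRange n).map fun i => (X i : MvPolynomial (Fin n) ℂ) ^ α i).prod := by
    rw [monomial_eq, C_1, one_mul, Finsupp.prod_fintype _ _ (by simp), ← Fin.prod_univ_def]
  rw [this, map_list_prod, List.map_map]
  congr 3
  ext1 i
  simp [hΦ]

lemma pairK_eq {n : ℕ} (T : Fin n → Module.End ℂ (MvPolynomial (Fin n) ℂ))
    (Φ : MvPolynomial (Fin n) ℂ →ₐ[ℂ] Module.End ℂ (MvPolynomial (Fin n) ℂ))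
    (hΦ : ∀ i, Φ (X i) = T i) (p q : MvPolynomial (Fin n) ℂ) :
    pairK (fun i p => T i p) p q = eval 0 (Φ (map (starRingEnd ℂ) p) q) := by
  unfold pairK
  congr 1
  conv_rhs => rw [p.as_sum]
  simp only [map_sum, LinearMap.sum_apply, map_monomial]
  refine Finset.sum_congr rfl fun α _ => ?_
  rw [monOp_eq T Φ hΦ, ← LinearMap.smul_apply, ← map_smul, smul_monomial, smul_eq_mul, mul_one]

lemma act_comp (n : ℕ) (M N : Matrix (Fin n) (Fin n) ℂ) (p : MvPolynomial (Fin n) ℂ) :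
    act n M (act n N p) = act n (N * M) p := by
  have : (act n M).comp (act n N) = act n (N * M) := by
    apply MvPolynomial.algHom_ext
    intro i
    simp only [act, AlgHom.comp_apply, aeval_X, map_sum, map_mul, algHom_C, algebraMap_eq,
      Matrix.mul_apply, Finset.sum_mul, Finset.mul_sum]
    rw [Finset.sum_comm]
    simp [mul_assoc]
  exact DFunLike.congr_fun this p

lemma act_one (n : ℕ) (p : MvPolynomial (Fin n) ℂ) : act n 1 p = p := by
  have : act n 1 = AlgHom.id ℂ _ := by
    apply MvPolynomial.algHom_ext
    intro i
    simp [act, Matrix.one_apply]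
  rw [this]; rfl

lemma eval_act (n : ℕ) (M : Matrix (Fin n) (Fin n) ℂ) (p : MvPolynomial (Fin n) ℂ) :
    eval 0 (act n M p) = eval 0 p := by
  have : (aeval (0 : Fin n → ℂ)).comp (act n M) = (aeval (0 : Fin n → ℂ) : _ →ₐ[ℂ] ℂ) := by
    apply MvPolynomial.algHom_ext
    intro i
    simp [act]
  exact DFunLike.congr_fun this p

lemma matOf_mul_inv {n : ℕ} {G : Subgroup (Matrix.unitaryGroup (Fin n) ℂ)} (g : G) :
    matOf g * matOf g⁻¹ = 1 := by
  simp [matOf]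

lemma matOf_inv_mul {n : ℕ} {G : Subgroup (Matrix.unitaryGroup (Fin n) ℂ)} (g : G) :
    matOf g⁻¹ * matOf g = 1 := by
  simp [matOf]

lemma star_matOf_inv {n : ℕ} {G : Subgroup (Matrix.unitaryGroup (Fin n) ℂ)} (g : G) (i j) :
    (starRingEnd ℂ) (matOf g⁻¹ i j) = matOf g j i := by
  simp [matOf, Matrix.star_apply]

/-- Homogeneity of integer degree. -/
def ZHom {n : ℕ} (z : ℤ) (q : MvPolynomial (Fin n) ℂ) : Prop :=
  ∀ d, coeff d q ≠ 0 → (d.degree : ℤ) = z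

lemma ZHom.step {n : ℕ} (T : MvPolynomial (Fin n) ℂ → MvPolynomial (Fin n) ℂ)
    (hTdeg : ∀ (m : ℕ) (p : MvPolynomial (Fin n) ℂ),
      p.IsHomogeneous (m + 1) → (T p).IsHomogeneous m)
    (hT0 : ∀ (c : ℂ), T (C c) = 0) {z : ℤ} {q : MvPolynomial (Fin n) ℂ} (h : ZHom z q) :
    ZHom (z - 1) (T q) := by
  by_cases hz : ∃ m : ℕ, z = m + 1
  · obtain ⟨m, rfl⟩ := hz
    have h1 : q.IsHomogeneous (m + 1) := by
      intro d hd
      have := h d hd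
      rw [Finsupp.degree_eq_weight_one] at this
      exact_mod_cast this
    intro d hd
    have h2 := hTdeg m q h1 hd
    rw [Finsupp.degree_eq_weight_one]
    simp only [add_sub_cancel_right]
    exact_mod_cast h2
  · have : q = C (coeff 0 q) := by
      ext d
      rw [coeff_C]
      split_ifs with hd
      · rw [hd]
      · by_contra hne
        have h1 := h d hne
        have h2 : d.degree ≠ 0 := by
          intro h0
          exact hd ((Finsupp.degree_eq_zero_iff d).1 h0).symm
        exact hz ⟨d.degree - 1, by omega⟩
    rw [this, hT0]
    intro d hd
    simp at hd

lemma ZHom.iter {n : ℕ} (T : MvPolynomial (Fin n) ℂ → MvPolynomial (Fin n) ℂ)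
    (hTdeg : ∀ (m : ℕ) (p : MvPolynomial (Fin n) ℂ),
      p.IsHomogeneous (m + 1) → (T p).IsHomogeneous m)
    (hT0 : ∀ (c : ℂ), T (C c) = 0) {z : ℤ} {q : MvPolynomial (Fin n) ℂ} (h : ZHom z q) (k : ℕ) :
    ZHom (z - k) (T^[k] q) := by
  induction k with
  | zero => simpa using h
  | succ k ih =>
    rw [Function.iterate_succ_apply']
    have := ZHom.step T hTdeg hT0 ih
    convert this using 1
    push_cast; ring

lemma ZHom.monOp {n : ℕ} (T : Fin n → MvPolynomial (Fin n) ℂ → MvPolynomial (Fin n) ℂ)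
    (hTdeg : ∀ (i : Fin n) (m : ℕ) (p : MvPolynomial (Fin n) ℂ),
      p.IsHomogeneous (m + 1) → (T i p).IsHomogeneous m)
    (hT0 : ∀ (i : Fin n) (c : ℂ), T i (C c) = 0) {z : ℤ} {q : MvPolynomial (Fin n) ℂ}
    (h : ZHom z q) (α : Fin n →₀ ℕ) : ZHom (z - α.degree) (monOp T α q) := by
  have key : ∀ L : List (Fin n), ZHom (z - ((L.map α).sum : ℕ))
      (((L.map fun i => (T i)^[α i]).foldr (· ∘ ·) id) q) := by
    intro L
    induction L with
    | nil => simpa using h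
    | cons a L ih =>
      have := ZHom.iter (T a) (hTdeg a) (hT0 a) ih (α a)
      simp only [List.map_cons, List.foldr_cons, Function.comp_apply, List.sum_cons]
      convert this using 1
      push_cast; ring
  have := key (List.finRange n)
  rw [← Fin.sum_univ_def] at this
  rw [Finsupp.degree_eq_sum]
  exact this

/-- Schur's lemma for invariant sesquilinear pairings. -/
lemma schur_pairing {G : Type} [Group G] [Fintype G] (τ σ : FDRep ℂ G) (hτ : Simple τ)
    (hσ : Simple σ) (he : IsEmpty (τ ≅ σ))
    (B : τ.V →ₗ⋆[ℂ] σ.V →ₗ[ℂ] ℂ)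
    (hB : ∀ g v w, B (τ.ρ g v) (σ.ρ g w) = B v w) (v : τ.V) (w : σ.V) : B v w = 0 := by
  classical
  let b := Module.finBasis ℂ τ.V
  let I : τ.V → τ.V → ℂ := fun v v' => ∑ i, (starRingEnd ℂ) (b.repr v i) * b.repr v' i
  let H : τ.V → τ.V → ℂ := fun v v' => ∑ g : G, I (τ.ρ g v) (τ.ρ g v')
  have hH : ∀ h v v', H (τ.ρ h v) (τ.ρ h v') = H v v' := by
    intro h v v'
    simp only [H, ← Module.End.mul_apply, ← map_mul]
    exact Fintype.sum_equiv (Equiv.mulRight h) _ _ (fun g => rfl)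
  have hpos : ∀ v, H v v = 0 → v = 0 := by
    intro v hv
    have h1 : H v v = ((∑ g : G, ∑ i, Complex.normSq (b.repr (τ.ρ g v) i) : ℝ) : ℂ) := by
      simp only [H, I]
      push_cast
      simp only [Complex.normSq_eq_conj_mul_self]
    rw [h1] at hv
    have h2 := Complex.ofReal_eq_zero.1 hv
    rw [Finset.sum_eq_zero_iff_of_nonneg
      (fun g _ => Finset.sum_nonneg fun i _ => Complex.normSq_nonneg _)] at h2
    have h3 := h2 1 (Finset.mem_univ _)
    rw [Finset.sum_eq_zero_iff_of_nonneg (fun i _ => Complex.normSq_nonneg _)] at h3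
    apply b.repr.map_eq_zero_iff.1
    ext i
    have := h3 i (Finset.mem_univ _)
    simpa using this
  have Hadd : ∀ v v₁ v₂, H v (v₁ + v₂) = H v v₁ + H v v₂ := by
    intro v v₁ v₂
    simp [H, I, mul_add, Finset.sum_add_distrib]
  have Hsmul : ∀ v (c : ℂ) v₁, H v (c • v₁) = c * H v v₁ := by
    intro v c v₁
    simp only [H, I, map_smul, Finsupp.smul_apply, smul_eq_mul, Finset.mul_sum]
    refine Finset.sum_congr rfl fun g _ => Finset.sum_congr rfl fun i _ => by ring
  have Hexp : ∀ v v', H v v' = ∑ i, (starRingEnd ℂ) (b.repr v i) * H (b i) v' := by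
    intro v v'
    let K : τ.V →ₗ⋆[ℂ] ℂ :=
      { toFun := fun u => H u v'
        map_add' := by
          intro x y
          simp [H, I, add_mul, Finset.sum_add_distrib]
        map_smul' := by
          intro c x
          simp only [H, I, map_smul, Finsupp.smul_apply, smul_eq_mul, Finset.mul_sum, map_mul]
          refine Finset.sum_congr rfl fun g _ => Finset.sum_congr rfl fun i _ => by ring }
    change K v = ∑ i, _ * K (b i)
    conv_lhs => rw [← b.sum_repr v]
    simp only [map_sum, LinearMap.map_smulₛₗ, smul_eq_mul]
  let M : τ.V →ₗ[ℂ] τ.V :=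
    { toFun := fun v' => ∑ i, H (b i) v' • b i
      map_add' := by
        intro x y
        simp [Hadd, add_smul, Finset.sum_add_distrib]
      map_smul' := by
        intro c x
        simp [Hsmul, mul_smul, Finset.smul_sum] }
  have hM : ∀ v v', H v v' = I v (M v') := by
    intro v v'
    rw [Hexp]
    simp [I, M, Finsupp.single_apply]
  have hMinj : Function.Injective M := by
    rw [← LinearMap.ker_eq_bot, LinearMap.ker_eq_bot']
    intro v hv
    apply hpos
    rw [hM, hv]
    simp [I]
  let E := LinearEquiv.ofInjectiveEndo M hMinj
  let A₀ : σ.V →ₗ[ℂ] τ.V := ∑ i, (B (b i)).smulRight (b i)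
  have hA₀ : ∀ v w, B v w = I v (A₀ w) := by
    intro v w
    conv_lhs => rw [← b.sum_repr v]
    simp only [map_sum, LinearMap.map_smulₛₗ, LinearMap.sum_apply, LinearMap.smul_apply, smul_eq_mul]
    simp [I, A₀, Finsupp.single_apply]
  let A : σ.V →ₗ[ℂ] τ.V := E.symm.toLinearMap.comp A₀
  have hA : ∀ v w, B v w = H v (A w) := by
    intro v w
    rw [hM, hA₀]
    congr 1
    exact (E.apply_symm_apply (A₀ w)).symm
  have hinj : ∀ x y, (∀ v, H v x = H v y) → x = y := by
    intro x y hxy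
    rw [← sub_eq_zero]
    apply hpos
    rw [sub_eq_add_neg, Hadd, hxy, ← neg_one_smul ℂ y, Hsmul]
    ring
  have hAeq : ∀ g w, A (σ.ρ g w) = τ.ρ g (A w) := by
    intro g w
    apply hinj
    intro v
    have hv : τ.ρ g (τ.ρ g⁻¹ v) = v := by
      rw [← Module.End.mul_apply, ← map_mul]; simp
    rw [← hA, ← hv, hB, hH, hA]
  let f : σ ⟶ τ := ⟨InducedCategory.homMk (ModuleCat.ofHom A), fun g => by
    ext w
    exact hAeq g w⟩
  have hf : f = 0 := by
    by_contra hne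
    have := isIso_of_hom_simple hne
    exact he.false (asIso f).symm
  have hA0 : A w = 0 := by
    have h1 : f.hom.hom.hom = (0 : σ ⟶ τ).hom.hom.hom := by rw [hf]
    exact LinearMap.congr_fun h1 w
  rw [hA, hA0]
  have := Hsmul v 0 0
  simpa using this

/-- the pairing `(p,q)_k = (p*(T(k))q)(0)` on polynomials is (i)
`G`-invariant, (ii) contravariant: `(ξ*p, q)_k = (p, T_ξ(k)q)_k`, and (iii) distinct
homogeneous isotypic components `P_{m,τ}`, `P_{l,σ}` are orthogonal unless `m = l` and
`τ ≅ σ`. -/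
theorem stmt11 (n : ℕ)
    (G : Subgroup (Matrix.unitaryGroup (Fin n) ℂ)) [Fintype G]
    -- the (commuting) Dunkl operators `T_i = T_{e_i}(k)`, homogeneous of degree −1,
    -- `G`-equivariant: `g T_ξ g⁻¹ = T_{gξ}`
    (T : Fin n → MvPolynomial (Fin n) ℂ → MvPolynomial (Fin n) ℂ)
    (hTcomm : ∀ (i j : Fin n) (p : MvPolynomial (Fin n) ℂ), T i (T j p) = T j (T i p))
    (hTadd : ∀ (i : Fin n) (p q : MvPolynomial (Fin n) ℂ), T i (p + q) = T i p + T i q)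
    (hTsmul : ∀ (i : Fin n) (c : ℂ) (p : MvPolynomial (Fin n) ℂ), T i (c • p) = c • T i p)
    (hTdeg : ∀ (i : Fin n) (m : ℕ) (p : MvPolynomial (Fin n) ℂ),
      p.IsHomogeneous (m + 1) → (T i p).IsHomogeneous m)
    (hT0 : ∀ (i : Fin n) (c : ℂ), T i (C c) = 0)
    (hTequiv : ∀ (g : G) (i : Fin n) (p : MvPolynomial (Fin n) ℂ),
      act n (matOf g⁻¹) (T i (act n (matOf g) p)) = ∑ j, matOf g j i • T j p) :
    -- (i) `G`-invariance
    (∀ (g : G) (p q : MvPolynomial (Fin n) ℂ),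
      pairK T (act n (matOf g⁻¹) p) (act n (matOf g⁻¹) q) = pairK T p q) ∧
    -- (ii) contravariance
    (∀ (ξ : Fin n → ℂ) (p q : MvPolynomial (Fin n) ℂ),
      pairK T ((∑ i, C ((starRingEnd ℂ) (ξ i)) * X i) * p) q =
        pairK T p (∑ i, ξ i • T i q)) ∧
    -- (iii) orthogonality of distinct homogeneous isotypic components
    (∀ (τ σ : FDRep ℂ G), Simple τ → Simple σ →
      ∀ (m l : ℕ) (p q : MvPolynomial (Fin n) ℂ),
      p.IsHomogeneous m → q.IsHomogeneous l →
      p ∈ (⨆ f : {f : τ.V →ₗ[ℂ] MvPolynomial (Fin n) ℂ //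
              ∀ (g : G) (v : τ.V), f (τ.ρ g v) = act n (matOf g⁻¹) (f v)},
            LinearMap.range f.val) →
      q ∈ (⨆ f : {f : σ.V →ₗ[ℂ] MvPolynomial (Fin n) ℂ //
              ∀ (g : G) (v : σ.V), f (σ.ρ g v) = act n (matOf g⁻¹) (f v)},
            LinearMap.range f.val) →
      (m ≠ l ∨ IsEmpty (τ ≅ σ)) → pairK T p q = 0) := by
  let T' : Fin n → Module.End ℂ (MvPolynomial (Fin n) ℂ) := fun i =>
    { toFun := T i, map_add' := hTadd i, map_smul' := hTsmul i }
  obtain ⟨Φ, hΦ⟩ := exists_subst T' (fun i j => LinearMap.ext fun p => hTcomm i j p)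
  have hpair : ∀ p q, pairK T p q = eval 0 (Φ (map (starRingEnd ℂ) p) q) := pairK_eq T' Φ hΦ
  have hT' : ∀ i q, T' i q = T i q := fun _ _ => rfl
  have h1 : ∀ (g : G) (p q : MvPolynomial (Fin n) ℂ),
      pairK T (act n (matOf g⁻¹) p) (act n (matOf g⁻¹) q) = pairK T p q := by
    intro g p q
    have key : ∀ q, Φ (map (starRingEnd ℂ) (act n (matOf g⁻¹) p)) (act n (matOf g⁻¹) q)
        = act n (matOf g⁻¹) (Φ (map (starRingEnd ℂ) p) q) := by
      induction p using MvPolynomial.induction_on with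
      | C a =>
        intro q
        have hC : ∀ c : ℂ, Φ (C c) = c • 1 := by
          intro c
          rw [← algebraMap_eq, AlgHom.commutes, Algebra.algebraMap_eq_smul_one]
        rw [algHom_C, algebraMap_eq, map_C, hC, LinearMap.smul_apply, LinearMap.smul_apply,
          Module.End.one_apply, Module.End.one_apply, map_smul]
      | add p₁ p₂ ih₁ ih₂ =>
        intro q
        simp only [map_add, LinearMap.add_apply, ih₁, ih₂]
      | mul_X p i ih =>
        intro q
        have hX : Φ (map (starRingEnd ℂ) (act n (matOf g⁻¹) (X i))) (act n (matOf g⁻¹) q)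
            = act n (matOf g⁻¹) (T i q) := by
          have h2 := hTequiv g i (act n (matOf g⁻¹) q)
          rw [act_comp, matOf_inv_mul, act_one] at h2
          rw [h2]
          simp only [act, aeval_X, map_sum, map_mul, map_C, map_X, LinearMap.sum_apply,
            star_matOf_inv, hΦ]
          refine Finset.sum_congr rfl fun j _ => ?_
          rw [← algebraMap_eq, AlgHom.commutes, Algebra.algebraMap_eq_smul_one]
          simp [hT']
        rw [map_mul, map_mul, map_mul, Module.End.mul_apply, hX, ih, map_mul, map_mul,
          Module.End.mul_apply, map_X, hΦ, hT']
    rw [hpair, hpair, key, eval_act]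
  refine ⟨h1, ?_, ?_⟩
  · intro ξ p q
    rw [hpair, hpair, map_mul, mul_comm, map_mul, Module.End.mul_apply]
    congr 2
    simp only [map_sum, map_mul, map_C, map_X, LinearMap.sum_apply, hΦ, Complex.conj_conj]
    refine Finset.sum_congr rfl fun j _ => ?_
    rw [← algebraMap_eq, AlgHom.commutes, Algebra.algebraMap_eq_smul_one]
    simp [hT']
  · intro τ σ hτ hσ m l p q hp hq hpm hqm hor
    rcases hor with hne | he
    · have hz : ZHom (l : ℤ) q := by
        intro d hd
        have := hq hd
        rw [Finsupp.degree_eq_weight_one]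
        exact_mod_cast this
      unfold pairK
      rw [map_sum]
      refine Finset.sum_eq_zero fun α hα => ?_
      have hα' : α.degree = m := by
        have := hp (mem_support_iff.1 hα)
        rw [Finsupp.degree_eq_weight_one]
        exact this
      have h2 := ZHom.monOp T hTdeg hT0 hz α
      rw [smul_eval]
      have h3 : eval 0 (monOp T α q) = 0 := by
        rw [eval_zero, constantCoeff_eq]
        by_contra h4
        have h5 := h2 0 h4
        simp at h5
        omega
      rw [h3, mul_zero]
    · have hzl : ∀ q, pairK T 0 q = 0 := by intro q; rw [hpair]; simp
      have hzr : ∀ p, pairK T p 0 = 0 := by intro q; rw [hpair]; simp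
      have hal : ∀ p₁ p₂ q, pairK T (p₁ + p₂) q = pairK T p₁ q + pairK T p₂ q := by
        intro p₁ p₂ q; simp [hpair]
      have har : ∀ p q₁ q₂, pairK T p (q₁ + q₂) = pairK T p q₁ + pairK T p q₂ := by
        intro p₁ p₂ q; simp [hpair]
      have hsr : ∀ p (c : ℂ) q, pairK T p (c • q) = c * pairK T p q := by
        intro p c q; simp [hpair]
      have hsl : ∀ (c : ℂ) p q, pairK T (c • p) q = (starRingEnd ℂ) c * pairK T p q := by
        intro c p q
        rw [hpair, hpair, smul_eq_C_mul, map_mul, map_C, ← smul_eq_C_mul, map_smul,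
          LinearMap.smul_apply, smul_eval]
      refine Submodule.iSup_induction _ (motive := fun p => pairK T p q = 0) hpm ?_ (hzl q) ?_
      · rintro ⟨f, hf⟩ _ ⟨v, rfl⟩
        refine Submodule.iSup_induction _ (motive := fun q => pairK T (f v) q = 0) hqm ?_ (hzr _) ?_
        · rintro ⟨h, hh⟩ _ ⟨w, rfl⟩
          let B : τ.V →ₗ⋆[ℂ] σ.V →ₗ[ℂ] ℂ :=
            LinearMap.mk₂'ₛₗ (starRingEnd ℂ) (RingHom.id ℂ) (fun v w => pairK T (f v) (h w))
              (by intro a b c; rw [map_add, hal])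
              (by intro a b c; rw [map_smul, hsl]; rfl)
              (by intro a b c; rw [map_add, har])
              (by intro a b c; rw [map_smul, hsr]; rfl)
          refine schur_pairing τ σ hτ hσ he B ?_ v w
          intro g v w
          change pairK T (f _) (h _) = pairK T (f v) (h w)
          rw [hf, hh, h1]
        · intro x y hx hy
          rw [har, hx, hy, add_zero]
      · intro x y hx hy
        rw [hal, hx, hy, add_zero]
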